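/- Let d ≥ 4, let Q be a real symmetric invertible d×d matrix, let r ≥ 1 and t ∈ ℝ with t ≠ 0. Then the product of the first d Minkowski successive minima satisfies M_{1,t}·M_{2,t}⋯M_{d,t} ≥ d^{−d} · ( min{ q₀·|t|·r/2 , 1/(q·|t|·r) } )^d. -/

import Mathlib

/-!
Already the first minimum is at least `c = d⁻¹ · min {q₀|t|r/2, 1/(q|t|r)}`, and hence so is every
`M_{k,t}` with `1 ≤ k ≤ d`. To see this, take a nonzero integer point `(m, n)`.

* If `m = 0`, then `F_t(m, n) ≥ r|t||Qn|_∞ ≥ r|t|q₀/√d`.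
* If `m ≠ 0` and `|tQn|_∞ ≤ 1/2`, then `F_t(m, n) ≥ r(|m|_∞ - 1/2) ≥ 1/2`, while `c ≤ 1/d`
  because `q₀ ≤ q`.
* If `m ≠ 0` and `|tQn|_∞ > 1/2`, then `|t|q√d|n|_∞ > 1/2`, so
  `F_t(m, n) ≥ r⁻¹|n|_∞ ≥ 1/(2√d q|t|r)`; this is at least `c` because `2√d ≤ d` when `d ≥ 4`.

The bounds on `|Qn|_∞` come from the spectral theorem (`eigMin_mul_norm_le`,
`norm_mulVec_le_eigMax_mul`) and the comparison of the Euclidean norm with the sup norm, which costs the factors `√d`.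
-/

open MeasureTheory Filter

/-- The quadratic form `Q[x] = ⟨Qx, x⟩` associated to a matrix `Q`. -/
noncomputable def quadForm {d : ℕ} (Q : Matrix (Fin d) (Fin d) ℝ) (x : Fin d → ℝ) : ℝ :=
  ∑ i, Q.mulVec x i * x i

/-- `Q` is of block-type: `Q = diag(Q⁺, −Q⁻)` with `Q⁺, Q⁻` positive definite. -/
def IsBlockType {d : ℕ} (Q : Matrix (Fin d) (Fin d) ℝ) : Prop :=
  ∃ (d₁ d₂ : ℕ) (h : d₁ + d₂ = d) (Qp : Matrix (Fin d₁) (Fin d₁) ℝ)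
    (Qm : Matrix (Fin d₂) (Fin d₂) ℝ),
    1 ≤ d₁ ∧ 1 ≤ d₂ ∧ Qp.PosDef ∧ Qm.PosDef ∧
    Q = (Matrix.fromBlocks Qp 0 0 (-Qm)).submatrix
      (fun i => finSumFinEquiv.symm (Fin.cast h.symm i))
      (fun i => finSumFinEquiv.symm (Fin.cast h.symm i))

/-- Casting an integer vector to a real vector. -/
def intVec {d : ℕ} (m : Fin d → ℤ) : Fin d → ℝ := fun i => (m i : ℝ)

/-- `q₀`: minimum of the absolute values of the eigenvalues of the symmetric matrix `Q`. -/
noncomputable def eigMin {d : ℕ} {Q : Matrix (Fin d) (Fin d) ℝ} (hQ : Q.IsHermitian) : ℝ :=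
  ⨅ j, |hQ.eigenvalues j|

/-- `q`: maximum of the absolute values of the eigenvalues of the symmetric matrix `Q`. -/
noncomputable def eigMax {d : ℕ} {Q : Matrix (Fin d) (Fin d) ℝ} (hQ : Q.IsHermitian) : ℝ :=
  ⨆ j, |hQ.eigenvalues j|

/-- `q̄ = max{q₀⁻¹, q}`. -/
noncomputable def eigBar {d : ℕ} {Q : Matrix (Fin d) (Fin d) ℝ} (hQ : Q.IsHermitian) : ℝ :=
  max (eigMin hQ)⁻¹ (eigMax hQ)

/-- The norm `F_t(x,y) = max{ r·|x + t·Qy|_∞ , r⁻¹·|y|_∞ }` on `ℝ^d × ℝ^d`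
(the norm of `Fin d → ℝ` is the sup-norm). -/
noncomputable def Fnorm {d : ℕ} (Q : Matrix (Fin d) (Fin d) ℝ) (r t : ℝ)
    (p : (Fin d → ℝ) × (Fin d → ℝ)) : ℝ :=
  max (r * ‖p.1 + t • Q.mulVec p.2‖) (r⁻¹ * ‖p.2‖)

/-- The `k`-th Minkowski successive minimum `M_{k,t}` of the convex body `{F_t ≤ 1}`
with respect to the lattice `ℤ^d × ℤ^d`. -/
noncomputable def Mink {d : ℕ} (Q : Matrix (Fin d) (Fin d) ℝ) (r t : ℝ) (k : ℕ) : ℝ :=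
  sInf {lam : ℝ | 0 < lam ∧ ∃ v : Fin k → (Fin d → ℤ) × (Fin d → ℤ),
    LinearIndependent ℝ (fun i => ((intVec (v i).1, intVec (v i).2) : (Fin d → ℝ) × (Fin d → ℝ))) ∧
    ∀ i, Fnorm Q r t (intVec (v i).1, intVec (v i).2) < lam}

/-- The product `M_{1,t} ⋯ M_{d,t}` of the first `d` successive minima. -/
noncomputable def MinkProd {d : ℕ} (Q : Matrix (Fin d) (Fin d) ℝ) (r t : ℝ) : ℝ :=
  ∏ k ∈ Finset.Icc 1 d, Mink Q r t k

open WithLp in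
/-- The coordinates of `Qx` in the eigenvector basis are those of `x` times the eigenvalues. -/
lemma inner_eigenvectorBasis_mulVec {d : ℕ} {Q : Matrix (Fin d) (Fin d) ℝ} (hQ : Q.IsHermitian)
    (x : Fin d → ℝ) (j : Fin d) :
    inner ℝ (hQ.eigenvectorBasis j) (toLp 2 (Q.mulVec x)) =
      hQ.eigenvalues j * inner ℝ (hQ.eigenvectorBasis j) (toLp 2 x) := by
  have h := hQ.mulVec_eigenvectorBasis j
  have hT : Q.transpose = Q := by simpa [Matrix.IsHermitian] using hQ
  simp only [EuclideanSpace.inner_eq_star_dotProduct, star_trivial]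
  rw [dotProduct_comm, Matrix.dotProduct_mulVec, ← Matrix.mulVec_transpose, hT, h,
    smul_dotProduct, dotProduct_comm, smul_eq_mul]

open WithLp in
lemma eigMin_mul_norm_le {d : ℕ} {Q : Matrix (Fin d) (Fin d) ℝ} (hQ : Q.IsHermitian)
    (x : Fin d → ℝ) :
    eigMin hQ * ‖toLp 2 x‖ ≤ ‖toLp 2 (Q.mulVec x)‖ := by
  have h0 : 0 ≤ eigMin hQ := Real.iInf_nonneg fun _ => abs_nonneg _
  refine (sq_le_sq₀ (by positivity) (norm_nonneg _)).1 ?_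
  rw [mul_pow, ← hQ.eigenvectorBasis.sum_sq_norm_inner_right,
    ← hQ.eigenvectorBasis.sum_sq_norm_inner_right, Finset.mul_sum]
  refine Finset.sum_le_sum fun j _ => ?_
  rw [inner_eigenvectorBasis_mulVec, norm_mul, mul_pow]
  gcongr
  exact ciInf_le (Set.finite_range _).bddBelow j

open WithLp in
lemma norm_mulVec_le_eigMax_mul {d : ℕ} {Q : Matrix (Fin d) (Fin d) ℝ} (hQ : Q.IsHermitian)
    (x : Fin d → ℝ) :
    ‖toLp 2 (Q.mulVec x)‖ ≤ eigMax hQ * ‖toLp 2 x‖ := by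
  have h0 : 0 ≤ eigMax hQ := Real.iSup_nonneg fun _ => abs_nonneg _
  refine (sq_le_sq₀ (norm_nonneg _) (by positivity)).1 ?_
  rw [mul_pow, ← hQ.eigenvectorBasis.sum_sq_norm_inner_right,
    ← hQ.eigenvectorBasis.sum_sq_norm_inner_right, Finset.mul_sum]
  refine Finset.sum_le_sum fun j _ => ?_
  rw [inner_eigenvectorBasis_mulVec, norm_mul, mul_pow]
  gcongr
  exact le_ciSup (f := fun j => |hQ.eigenvalues j|) (Set.finite_range _).bddAbove j

lemma norm_le_norm_toLp {d : ℕ} (x : Fin d → ℝ) : ‖x‖ ≤ ‖WithLp.toLp 2 x‖ :=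
  (pi_norm_le_iff_of_nonneg (norm_nonneg _)).2 fun i => PiLp.norm_apply_le (WithLp.toLp 2 x) i

lemma norm_toLp_le {d : ℕ} (x : Fin d → ℝ) : ‖WithLp.toLp 2 x‖ ≤ √d * ‖x‖ := by
  rw [EuclideanSpace.norm_eq, ← Real.sqrt_sq (norm_nonneg x), ← Real.sqrt_mul (by positivity)]
  apply Real.sqrt_le_sqrt
  calc ∑ i, ‖x i‖ ^ 2 ≤ ∑ _i : Fin d, ‖x‖ ^ 2 := by
        gcongr with i
        exact norm_le_pi_norm x i
    _ = d * ‖x‖ ^ 2 := by simp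

lemma one_le_norm_intVec {d : ℕ} {m : Fin d → ℤ} (hm : m ≠ 0) : 1 ≤ ‖intVec m‖ := by
  obtain ⟨i, hi⟩ := Function.ne_iff.1 hm
  refine le_trans ?_ (norm_le_pi_norm (intVec m) i)
  rw [intVec, Real.norm_eq_abs]
  exact_mod_cast Int.one_le_abs hi

lemma intVec_zero {d : ℕ} : intVec (0 : Fin d → ℤ) = 0 := by
  ext i; simp [intVec]

/-- The lower bound for `F_t` at a nonzero integer point, that is, for the first minimum. -/
lemma le_Fnorm_intVec {d : ℕ} (hd : 4 ≤ d) {Q : Matrix (Fin d) (Fin d) ℝ}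
    (hQ : Q.IsHermitian) {r : ℝ} (hr : 1 ≤ r) (t : ℝ) {m n : Fin d → ℤ} (hmn : m ≠ 0 ∨ n ≠ 0) :
    (d : ℝ)⁻¹ * min (eigMin hQ * |t| * r / 2) (1 / (eigMax hQ * |t| * r)) ≤
      Fnorm Q r t (intVec m, intVec n) := by
  have hd' : (4 : ℝ) ≤ d := by exact_mod_cast hd
  have hs : 2 ≤ √(d : ℝ) := Real.le_sqrt_of_sq_le (by linarith)
  have hss : √(d : ℝ) * √d = d := Real.mul_self_sqrt (by linarith)
  have hr0 : 0 < r := by linarith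
  have h0 : 0 ≤ eigMin hQ := Real.iInf_nonneg fun _ => abs_nonneg _
  have h1 : 0 ≤ eigMax hQ := Real.iSup_nonneg fun _ => abs_nonneg _
  have h01 : eigMin hQ ≤ eigMax hQ :=
    (ciInf_le (Set.finite_range _).bddBelow (⟨0, by omega⟩ : Fin d)).trans
      (le_ciSup (f := fun j => |hQ.eigenvalues j|) (Set.finite_range _).bddAbove _)
  -- With `u = q|t|r` the minimum is at most `min {u/2, 1/u} ≤ 1`.
  have hmin : min (eigMin hQ * |t| * r / 2) (1 / (eigMax hQ * |t| * r)) ≤ 1 := by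
    have hu : eigMin hQ * |t| * r ≤ eigMax hQ * |t| * r := by gcongr
    rcases le_total (eigMax hQ * |t| * r) 2 with h | h
    · exact (min_le_left _ _).trans (by linarith)
    · refine (min_le_right _ _).trans ?_
      rw [div_le_one (by linarith)]
      linarith
  have hhalf : (d : ℝ)⁻¹ * min (eigMin hQ * |t| * r / 2) (1 / (eigMax hQ * |t| * r)) ≤ 1 / 2 := by
    rw [inv_mul_le_iff₀ (by linarith)]
    linarith
  have hF1 : r * ‖intVec m + t • Q.mulVec (intVec n)‖ ≤ Fnorm Q r t (intVec m, intVec n) :=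
    le_max_left _ _
  have hF2 : r⁻¹ * ‖intVec n‖ ≤ Fnorm Q r t (intVec m, intVec n) := le_max_right _ _
  by_cases hm : m = 0
  · have hn := one_le_norm_intVec (hmn.resolve_left (not_not.2 hm))
    refine le_trans ?_ hF1
    rw [hm, intVec_zero, zero_add, norm_smul, Real.norm_eq_abs]
    have hQn : eigMin hQ ≤ √d * ‖Q.mulVec (intVec n)‖ :=
      calc eigMin hQ ≤ eigMin hQ * ‖WithLp.toLp 2 (intVec n)‖ :=
            le_mul_of_one_le_right h0 (hn.trans (norm_le_norm_toLp _))
        _ ≤ _ := (eigMin_mul_norm_le hQ _).trans (norm_toLp_le _)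
    have hQn' : eigMin hQ ≤ d * ‖Q.mulVec (intVec n)‖ :=
      hQn.trans (by gcongr; nlinarith)
    rw [inv_mul_le_iff₀ (by linarith)]
    calc min (eigMin hQ * |t| * r / 2) (1 / (eigMax hQ * |t| * r))
        ≤ eigMin hQ * |t| * r / 2 := min_le_left _ _
      _ ≤ eigMin hQ * |t| * r := half_le_self (by positivity)
      _ ≤ (d * ‖Q.mulVec (intVec n)‖) * |t| * r := by gcongr
      _ = _ := by ring
  · have hm1 := one_le_norm_intVec hm
    rcases le_or_gt ‖t • Q.mulVec (intVec n)‖ (1 / 2) with hsmall | hbig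
    · refine hhalf.trans (le_trans ?_ hF1)
      have := norm_sub_le (intVec m + t • Q.mulVec (intVec n)) (t • Q.mulVec (intVec n))
      rw [add_sub_cancel_right] at this
      nlinarith
    · refine le_trans ?_ hF2
      rw [norm_smul, Real.norm_eq_abs] at hbig
      have hQn : ‖Q.mulVec (intVec n)‖ ≤ eigMax hQ * (√d * ‖intVec n‖) :=
        (norm_le_norm_toLp _).trans ((norm_mulVec_le_eigMax_mul hQ _).trans (by gcongr; exact norm_toLp_le _))
      have hQt : 1 / 2 < |t| * (eigMax hQ * (√d * ‖intVec n‖)) :=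
        hbig.trans_le (by gcongr)
      -- The preceding bound forces `q|t| > 0`, so the reciprocal below is not a junk value.
      have hqt : 0 < eigMax hQ * |t| := by
        refine lt_of_le_of_ne (by positivity) fun h => ?_
        have : |t| * (eigMax hQ * (√d * ‖intVec n‖)) = 0 := by
          rw [← mul_assoc, mul_comm |t|, ← h, zero_mul]
        linarith
      have hdn : 1 ≤ d * (eigMax hQ * |t| * ‖intVec n‖) := by
        have : 2 * √(d : ℝ) ≤ d := by nlinarith
        have h3 : 2 * √d * (eigMax hQ * |t| * ‖intVec n‖) ≤
            d * (eigMax hQ * |t| * ‖intVec n‖) := by gcongr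
        linarith
      rw [inv_mul_le_iff₀ (by linarith)]
      refine (min_le_right _ _).trans ?_
      rw [div_le_iff₀ (by positivity)]
      refine hdn.trans (le_of_eq ?_)
      field_simp

/-- The successive minima of index `k ≤ d` are infima of nonempty sets, as witnessed by the
vectors `(e_i, 0)`. -/
lemma Mink_set_nonempty {d : ℕ} (Q : Matrix (Fin d) (Fin d) ℝ) (r t : ℝ) {k : ℕ} (hk : k ≤ d) :
    {lam : ℝ | 0 < lam ∧ ∃ v : Fin k → (Fin d → ℤ) × (Fin d → ℤ),
      LinearIndependent ℝ
        (fun i => ((intVec (v i).1, intVec (v i).2) : (Fin d → ℝ) × (Fin d → ℝ))) ∧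
      ∀ i, Fnorm Q r t (intVec (v i).1, intVec (v i).2) < lam}.Nonempty := by
  let v : Fin k → (Fin d → ℤ) × (Fin d → ℤ) := fun i => (Pi.single (Fin.castLE hk i) 1, 0)
  refine ⟨1 + ∑ i, |Fnorm Q r t (intVec (v i).1, intVec (v i).2)|, by positivity, v, ?_, fun i => ?_⟩
  · refine LinearIndependent.of_comp (LinearMap.fst ℝ (Fin d → ℝ) (Fin d → ℝ)) ?_
    have h := (Pi.basisFun ℝ (Fin d)).linearIndependent.comp _ (Fin.castLE_injective hk)
    convert h using 1
    ext i j
    simp [v, intVec, Pi.single_apply]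
  · have := Finset.single_le_sum
      (f := fun i => |Fnorm Q r t (intVec (v i).1, intVec (v i).2)|)
      (fun i _ => abs_nonneg _) (Finset.mem_univ i)
    have := le_abs_self (Fnorm Q r t (intVec (v i).1, intVec (v i).2))
    linarith

/-- Lower bound for the product of the Minkowski minima (Corollary `multineq`): for `d ≥ 4`,
`r ≥ 1` and `t ≠ 0`,
`M_{1,t}⋯M_{d,t} ≥ d^{−d} (min{q₀|t|r/2, 1/(q|t|r)})^d`. -/
theorem minkProd_lower_bound (d : ℕ) (hd : 4 ≤ d) (Q : Matrix (Fin d) (Fin d) ℝ)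
    (hQ : Q.IsHermitian) (hdet : IsUnit Q.det)
    (r : ℝ) (hr : 1 ≤ r) (t : ℝ) (ht : t ≠ 0) :
    ((d : ℝ) ^ d)⁻¹ * (min (eigMin hQ * |t| * r / 2) (1 / (eigMax hQ * |t| * r))) ^ d ≤
      MinkProd Q r t := by
  have h0 : 0 ≤ eigMin hQ := Real.iInf_nonneg fun _ => abs_nonneg _
  have h1 : 0 ≤ eigMax hQ := Real.iSup_nonneg fun _ => abs_nonneg _
  have hr0 : 0 < r := by linarith
  have hk : ∀ k ∈ Finset.Icc 1 d,
      (d : ℝ)⁻¹ * min (eigMin hQ * |t| * r / 2) (1 / (eigMax hQ * |t| * r)) ≤ Mink Q r t k := by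
    intro k hk
    rw [Finset.mem_Icc] at hk
    refine le_csInf (Mink_set_nonempty Q r t hk.2) ?_
    rintro lam ⟨-, v, hv, hlam⟩
    refine (le_Fnorm_intVec hd hQ hr t ?_).trans (hlam ⟨0, hk.1⟩).le
    by_contra! h
    refine hv.ne_zero ⟨0, hk.1⟩ ?_
    rw [h.1, h.2, intVec_zero, Prod.mk_zero_zero]
  have hp := Finset.prod_le_prod (fun k _ => by positivity) hk
  rw [Finset.prod_const, Nat.card_Icc, Nat.add_sub_cancel, mul_pow, inv_pow] at hp
  exact hp
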